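/- arXiv:2307.00650 — 2 statements merged into one kernel-verified Lean document; each statement's English description precedes it below -/
import Mathlib

section
/- Let β_* ∈ (β̲_*, 1) and β^* ∈ (β_*, 1). Then for every x₀ > 0 and every δ > 0 there exists S₁ ∈ ℕ, depending only on x₀, β_*, β^* and δ, such that for every sequence (α_n) with α_n ∈ [β_*, β^*] for all n, the sequence defined by x_{n+1} = G(α_n, x_n) satisfies x_n ∈ (K−δ, K+δ) for all n ≥ S₁. -/
/-!
All states reachable at time `n` from a compact trapping interval form a decreasing sequence of
compact sets, whose intersection `A` satisfies `A ⊆ G (T) (A)` for the set `T` of admissible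
controls. Let `a` and `b` be the least and greatest points of `A`, and write `b = G α x` and
`a = G α' x'` with `x, x' ∈ A`. Below `K` the map `G α` moves points up and above `K` down, so
`x ≤ K ≤ x'`; if `A` is not `{K}`, then both inequalities are strict. Lowering the two controls to
one `β₀` at which `G β₀ ∘ G β₀` does not move points below `K` down makes both jumps longer, and
the intermediate value theorem for `G β₀` on `[x, K]` then gives `x < a`, contradicting the
minimality of `a`. Hence `A = {K}`, and by compactness the reachable sets shrink into every
neighbourhood of `K` after finitely many steps, uniformly in the controls. Such a `β₀` can be chosen
below all controls as soon as the set whose infimum is `β̲_*` is nonempty, and it is: under the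
one-sided Lipschitz bounds, `G β` keeps points on their side of `K` for `β` close to `1`.
-/

open Set Filter

/-- Prediction-based control map `G β x = (1−β) f x + β x`. -/
noncomputable def G (f : ℝ → ℝ) (β x : ℝ) : ℝ := (1 - β) * f x + β * x

open Topology

section ReachableSet

variable {P X : Type*} {F : P → X → X} {T : Set P} {S : Set X}

/-- The set of states reachable at time `n` from `S` when the nonautonomous system
`x (n + 1) = F (α n) (x n)` is driven by controls `α n ∈ T`. -/
def reachableSet (F : P → X → X) (T : Set P) (S : Set X) (n : ℕ) : Set X :=
  (image2 F T)^[n] S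

lemma reachableSet_succ (n : ℕ) :
    reachableSet F T S (n + 1) = image2 F T (reachableSet F T S n) :=
  Function.iterate_succ_apply' ..

lemma antitone_reachableSet (hS : image2 F T S ⊆ S) : Antitone (reachableSet F T S) :=
  Monotone.antitone_iterate_of_map_le (fun _ _ h ↦ image2_subset_left h) hS

lemma reachableSet_subset (hS : image2 F T S ⊆ S) (n : ℕ) : reachableSet F T S n ⊆ S :=
  antitone_reachableSet hS n.zero_le

lemma orbit_mem_reachableSet {α : ℕ → P} (hα : ∀ n, α n ∈ T) {x : ℕ → X} (hx₀ : x 0 ∈ S)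
    (hx : ∀ n, x (n + 1) = F (α n) (x n)) (n : ℕ) : x n ∈ reachableSet F T S n := by
  induction n with
  | zero => exact hx₀
  | succ n ih =>
    rw [reachableSet_succ, hx]
    exact mem_image2_of_mem (hα n) ih

variable [TopologicalSpace P] [TopologicalSpace X]

lemma isCompact_reachableSet (hT : IsCompact T) (hSc : IsCompact S)
    (hF : ContinuousOn (fun p : P × X ↦ F p.1 p.2) (T ×ˢ S)) (hS : image2 F T S ⊆ S) (n : ℕ) :
    IsCompact (reachableSet F T S n) := by
  induction n with
  | zero => exact hSc
  | succ n ih =>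
    rw [reachableSet_succ, ← image_prod]
    exact (hT.prod ih).image_of_continuousOn
      (hF.mono (Set.prod_mono_right (reachableSet_subset hS n)))

variable [T2Space P] [T2Space X]

lemma iInter_reachableSet_subset_image2 (hT : IsCompact T) (hSc : IsCompact S)
    (hF : ContinuousOn (fun p : P × X ↦ F p.1 p.2) (T ×ˢ S)) (hS : image2 F T S ⊆ S) :
    ⋂ n, reachableSet F T S n ⊆ image2 F T (⋂ n, reachableSet F T S n) := by
  intro a ha
  let fiber (n : ℕ) : Set (P × X) := T ×ˢ reachableSet F T S n ∩ (fun p ↦ F p.1 p.2) ⁻¹' {a}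
  have fiber_compact (n : ℕ) : IsCompact (fiber n) := by
    have hprod := hT.prod (isCompact_reachableSet hT hSc hF hS n)
    have hFn := hF.mono (Set.prod_mono_right (s := T) (reachableSet_subset hS n))
    exact hprod.of_isClosed_subset
      (hFn.preimage_isClosed_of_isClosed hprod.isClosed isClosed_singleton) inter_subset_left
  have fiber_nonempty (n : ℕ) : (fiber n).Nonempty := by
    have han : a ∈ reachableSet F T S (n + 1) := mem_iInter.1 ha (n + 1)
    rw [reachableSet_succ] at han
    obtain ⟨α, hα, x, hx, hxa⟩ := han
    exact ⟨(α, x), ⟨hα, hx⟩, hxa⟩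
  have fiber_anti (n : ℕ) : fiber (n + 1) ⊆ fiber n :=
    inter_subset_inter_left _ (Set.prod_mono_right (antitone_reachableSet hS n.le_succ))
  obtain ⟨⟨α, x⟩, hp⟩ := IsCompact.nonempty_iInter_of_sequence_nonempty_isCompact_isClosed fiber
    fiber_anti fiber_nonempty (fiber_compact 0) fun n ↦ (fiber_compact n).isClosed
  rw [mem_iInter] at hp
  exact ⟨α, (hp 0).1.1, x, mem_iInter.2 fun n ↦ (hp n).1.2, (hp 0).2⟩

theorem exists_forall_ge_orbit_mem (hT : IsCompact T) (hSc : IsCompact S)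
    (hF : ContinuousOn (fun p : P × X ↦ F p.1 p.2) (T ×ˢ S)) (hS : image2 F T S ⊆ S) {U : Set X}
    (hU : ∀ A ⊆ S, IsCompact A → A ⊆ image2 F T A → ∀ a ∈ A, U ∈ 𝓝 a) :
    ∃ N : ℕ, ∀ α : ℕ → P, (∀ n, α n ∈ T) → ∀ x : ℕ → X, x 0 ∈ S →
      (∀ n, x (n + 1) = F (α n) (x n)) → ∀ n ≥ N, x n ∈ U := by
  have hcompact := isCompact_reachableSet hT hSc hF hS
  have hAS : ⋂ n, reachableSet F T S n ⊆ S := iInter_subset _ 0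
  have hA : IsCompact (⋂ n, reachableSet F T S n) :=
    hSc.of_isClosed_subset (isClosed_iInter fun n ↦ (hcompact n).isClosed) hAS
  obtain ⟨N, hN⟩ := exists_subset_nhds_of_isCompact (antitone_reachableSet hS).directed_ge hcompact
    (hU _ hAS hA (iInter_reachableSet_subset_image2 hT hSc hF hS))
  exact ⟨N, fun α hα x hx₀ hx n hn ↦
    hN (antitone_reachableSet hS hn (orbit_mem_reachableSet hα hx₀ hx n))⟩

end ReachableSet

section ControlledMap

variable {f : ℝ → ℝ} {α β x : ℝ} {s : Set ℝ}

lemma G_sub_self (f : ℝ → ℝ) (β x : ℝ) : G f β x - x = (1 - β) * (f x - x) := by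
  unfold G; ring

lemma lt_G_iff (hβ : β < 1) : x < G f β x ↔ x < f x := by
  rw [← sub_pos, G_sub_self, mul_pos_iff_of_pos_left (sub_pos.2 hβ), sub_pos]

lemma G_lt_iff (hβ : β < 1) : G f β x < x ↔ f x < x := by
  rw [← sub_neg, G_sub_self, ← smul_eq_mul, smul_neg_iff_of_pos_left (sub_pos.2 hβ), sub_neg]

lemma le_G_iff (hβ : β < 1) : x ≤ G f β x ↔ x ≤ f x := by
  simpa only [not_lt] using (G_lt_iff hβ).not

lemma G_le_iff (hβ : β < 1) : G f β x ≤ x ↔ f x ≤ x := by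
  simpa only [not_lt] using (lt_G_iff hβ).not

lemma G_eq_self (hx : f x = x) : G f β x = x := by
  rw [← sub_eq_zero, G_sub_self, hx, sub_self, mul_zero]

lemma G_lt_map (hβ : 0 < β) (hx : x < f x) : G f β x < f x := by
  unfold G; nlinarith

lemma G_lt_G_of_lt_map (hβ : β < α) (hx : x < f x) : G f α x < G f β x := by
  unfold G; nlinarith

lemma G_lt_G_of_map_lt (hβ : β < α) (hx : f x < x) : G f β x < G f α x := by
  unfold G; nlinarith

lemma G_mem_of_convex (hs : Convex ℝ s) (hβ₀ : 0 ≤ β) (hβ₁ : β ≤ 1) (hx : x ∈ s) (hfx : f x ∈ s) :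
    G f β x ∈ s :=
  hs hfx hx (sub_nonneg.2 hβ₁) hβ₀ (sub_add_cancel 1 β)

lemma continuousOn_G (hf : ContinuousOn f s) (T : Set ℝ) :
    ContinuousOn (fun p : ℝ × ℝ ↦ G f p.1 p.2) (T ×ˢ s) := by
  have hf_snd : ContinuousOn (fun p : ℝ × ℝ ↦ f p.2) (T ×ˢ s) :=
    hf.comp continuousOn_snd fun _ hp ↦ hp.2
  exact ((continuousOn_const.sub continuousOn_fst).mul hf_snd).add
    (continuousOn_fst.mul continuousOn_snd)

lemma G_le_iff_sub_le_mul {K L : ℝ} (hβ : β < 1) (hL : (1 - β) * L = β) :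
    G f β x ≤ K ↔ f x - K ≤ L * (K - x) := by
  have hG : K - G f β x = (1 - β) * (L * (K - x) - (f x - K)) := by
    unfold G; linear_combination (x - K) * hL
  rw [← sub_nonneg, hG, mul_nonneg_iff_of_pos_left (sub_pos.2 hβ), sub_nonneg]

lemma le_G_iff_sub_le_mul {K L : ℝ} (hβ : β < 1) (hL : (1 - β) * L = β) :
    K ≤ G f β x ↔ K - f x ≤ L * (x - K) := by
  have hG : G f β x - K = (1 - β) * (L * (x - K) - (K - f x)) := by
    unfold G; linear_combination (K - x) * hL
  rw [← sub_nonneg, hG, mul_nonneg_iff_of_pos_left (sub_pos.2 hβ), sub_nonneg]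

lemma exists_forall_G_le_and_le_G {K L₁ L₂ : ℝ} {t : Set ℝ} (hs : s ⊆ Iic K) (ht : t ⊆ Ici K)
    (hL₁ : ∀ x ∈ s, f x - K ≤ L₁ * (K - x)) (hL₂ : ∀ x ∈ t, K - f x ≤ L₂ * (x - K)) :
    ∃ β ∈ Ioo (0 : ℝ) 1, (∀ x ∈ s, G f β x ≤ K) ∧ ∀ x ∈ t, K ≤ G f β x := by
  obtain ⟨L, hL, hL₁L, hL₂L⟩ : ∃ L, 0 < L ∧ L₁ ≤ L ∧ L₂ ≤ L :=
    ⟨max 1 (max L₁ L₂), by positivity, by simp, by simp⟩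
  have hβ : L / (L + 1) < 1 := (div_lt_one (by linarith)).2 (lt_add_one L)
  have hβL : (1 - L / (L + 1)) * L = L / (L + 1) := by field_simp; ring
  refine ⟨L / (L + 1), ⟨by positivity, hβ⟩, fun x hx ↦ ?_, fun x hx ↦ ?_⟩
  · have hxK : 0 ≤ K - x := sub_nonneg.2 (hs hx)
    exact (G_le_iff_sub_le_mul hβ hβL).2 ((hL₁ x hx).trans (by gcongr))
  · have hKx : 0 ≤ x - K := sub_nonneg.2 (ht hx)
    exact (le_G_iff_sub_le_mul hβ hβL).2 ((hL₂ x hx).trans (by gcongr))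

end ControlledMap

lemma map_eq_of_eventually_le_of_eventually_ge {X : Type*} [LinearOrder X] [TopologicalSpace X]
    [OrderClosedTopology X] {f : X → X} {K : X} [(𝓝[<] K).NeBot] [(𝓝[>] K).NeBot]
    (hf : ContinuousAt f K) (hleft : ∀ᶠ x in 𝓝[<] K, x ≤ f x)
    (hright : ∀ᶠ x in 𝓝[>] K, f x ≤ x) : f K = K := by
  have hf_within (s : Set X) : Tendsto f (𝓝[s] K) (𝓝 (f K)) := hf.continuousWithinAt
  have hid_within (s : Set X) : Tendsto id (𝓝[s] K) (𝓝 K) := continuousWithinAt_id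
  exact le_antisymm (le_of_tendsto_of_tendsto (hf_within _) (hid_within _) hright)
    (le_of_tendsto_of_tendsto (hid_within _) (hf_within _) hleft)

/-- A continuous map on `(0, ∞)` whose graph lies above the diagonal on `(0, K)` and strictly
between `0` and the diagonal on `(K, ∞)`, as for a population model with equilibrium `K`. -/
structure IsPopulationMap (f : ℝ → ℝ) (K : ℝ) : Prop where
  continuousOn : ContinuousOn f (Ioi 0)
  equilibrium_pos : 0 < K
  lt_map : ∀ x ∈ Ioo 0 K, x < f x
  map_pos_and_lt : ∀ x ∈ Ioi K, 0 < f x ∧ f x < x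

namespace IsPopulationMap

variable {f : ℝ → ℝ} {K : ℝ}

lemma map_equilibrium (hf : IsPopulationMap f K) : f K = K := by
  have hK := hf.equilibrium_pos
  refine map_eq_of_eventually_le_of_eventually_ge
    (hf.continuousOn.continuousAt (Ioi_mem_nhds hK)) ?_ ?_
  · filter_upwards [Ioo_mem_nhdsLT hK] with x hx using (hf.lt_map x hx).le
  · filter_upwards [self_mem_nhdsWithin] with x hx using (hf.map_pos_and_lt x hx).2.le

lemma le_map (hf : IsPopulationMap f K) {x : ℝ} (hx : x ∈ Ioc 0 K) : x ≤ f x := by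
  rcases hx.2.eq_or_lt with rfl | hxK
  · exact hf.map_equilibrium.ge
  · exact (hf.lt_map x ⟨hx.1, hxK⟩).le

lemma map_le (hf : IsPopulationMap f K) {x : ℝ} (hx : K ≤ x) : f x ≤ x := by
  rcases hx.eq_or_lt with rfl | hxK
  · exact hf.map_equilibrium.le
  · exact (hf.map_pos_and_lt x hxK).2.le

lemma map_pos (hf : IsPopulationMap f K) {x : ℝ} (hx : 0 < x) : 0 < f x := by
  rcases le_or_gt x K with hxK | hxK
  · exact hx.trans_le (hf.le_map ⟨hx, hxK⟩)
  · exact (hf.map_pos_and_lt x hxK).1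

lemma exists_mapsTo_Icc (hf : IsPopulationMap f K) {fm : ℝ} (hfm : fm ∈ upperBounds (f '' Ioc 0 K))
    {C : Set ℝ} (hC : IsCompact C) (hC₀ : C ⊆ Ioi 0) :
    ∃ m M, 0 < m ∧ C ⊆ Icc m M ∧ MapsTo f (Icc m M) (Icc m M) := by
  have hK := hf.equilibrium_pos
  obtain ⟨B, hB⟩ := hC.bddAbove
  let M := max B fm
  have hKM : Icc K M ⊆ Ioi 0 := fun x hx ↦ hK.trans_le hx.1
  have hcompact : IsCompact (insert K (C ∪ f '' Icc K M)) :=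
    (hC.union (isCompact_Icc.image_of_continuousOn (hf.continuousOn.mono hKM))).insert K
  obtain ⟨m, hm, hmin⟩ := hcompact.exists_isLeast (insert_nonempty _ _)
  have hm₀ : 0 < m := by
    rcases hm with rfl | hm | ⟨x, hx, rfl⟩
    exacts [hK, hC₀ hm, hf.map_pos (hKM hx)]
  refine ⟨m, M, hm₀, fun x hx ↦ ⟨hmin (.inr (.inl hx)), (hB hx).trans (le_max_left _ _)⟩, ?_⟩
  intro x hx
  rcases le_total x K with hxK | hxK
  · have hx' : x ∈ Ioc 0 K := ⟨hm₀.trans_le hx.1, hxK⟩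
    exact ⟨hx.1.trans (hf.le_map hx'), (hfm (mem_image_of_mem f hx')).trans (le_max_right _ _)⟩
  · exact ⟨hmin (.inr (.inr ⟨x, ⟨hxK, hx.2⟩, rfl⟩)), (hf.map_le hxK).trans hx.2⟩

section Attractor

variable {fm f2m β₀ : ℝ} (hf : IsPopulationMap f K)
  (hfm : fm ∈ upperBounds (f '' Ioc 0 K)) (hf2m : f2m ∈ lowerBounds (f '' Ioo K fm))
  (hβ₀ : 0 ≤ β₀) (htwo : ∀ x ∈ Ioo f2m K, x ≤ G f β₀ (G f β₀ x))
include hf hfm hf2m hβ₀ htwo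

lemma lt_G_of_le_G {α α' x y : ℝ} (hα : α ∈ Ioo β₀ 1) (hα' : α' ∈ Ioo β₀ 1) (hx : x ∈ Ioo 0 K)
    (hy : K < y) (hyx : y ≤ G f α x) : x < G f α' y := by
  have hfx := hf.lt_map x hx
  have hfy := (hf.map_pos_and_lt y hy).2
  have hyfm : y < fm := calc
    y ≤ G f α x := hyx
    _ < f x := G_lt_map (hβ₀.trans_lt hα.1) hfx
    _ ≤ fm := hfm (mem_image_of_mem f (Ioo_subset_Ioc_self hx))
  have hf2m_G : f2m ≤ G f α' y := by
    have hf2m_fy : f2m ≤ f y := hf2m (mem_image_of_mem f ⟨hy, hyfm⟩)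
    exact G_mem_of_convex (convex_Ici f2m) (hβ₀.trans hα'.1.le) hα'.2.le
      (hf2m_fy.trans hfy.le) hf2m_fy
  rcases lt_or_ge x f2m with hxf2m | hxf2m
  · exact hxf2m.trans_le hf2m_G
  have hcont : ContinuousOn (G f β₀) (Icc x K) :=
    (continuousOn_G (hf.continuousOn.mono fun z hz ↦ hx.1.trans_le hz.1) univ).comp
      (continuousOn_const.prodMk continuousOn_id) fun z hz ↦ ⟨mem_univ β₀, hz⟩
  obtain ⟨z, hz, hzy⟩ : y ∈ G f β₀ '' Ioo x K := by
    refine intermediate_value_Ioo' hx.2.le hcont ⟨?_, hyx.trans_lt (G_lt_G_of_lt_map hα.1 hfx)⟩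
    rwa [G_eq_self hf.map_equilibrium]
  calc
    x < z := hz.1
    _ ≤ G f β₀ (G f β₀ z) := htwo z ⟨hxf2m.trans_lt hz.1, hz.2⟩
    _ = G f β₀ y := by rw [hzy]
    _ < G f α' y := G_lt_G_of_map_lt hα'.1 hfy

lemma subset_singleton_of_subset_image2_G {T A : Set ℝ} (hT : T ⊆ Ioo β₀ 1) (hA : IsCompact A)
    (hA₀ : A ⊆ Ioi 0) (hAG : A ⊆ image2 (G f) T A) : A ⊆ {K} := by
  rcases A.eq_empty_or_nonempty with rfl | hne
  · exact empty_subset _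
  obtain ⟨a, haA, ha⟩ := hA.exists_isLeast hne
  obtain ⟨b, hbA, hb⟩ := hA.exists_isGreatest hne
  obtain ⟨α, hα, x, hxA, hxb⟩ := hAG hbA
  obtain ⟨α', hα', y, hyA, hya⟩ := hAG haA
  have hfix (β : ℝ) : G f β K = K := G_eq_self hf.map_equilibrium
  have hxK : x ≤ K := by
    by_contra! hKx
    exact (((G_lt_iff (hT hα).2).2 (hf.map_pos_and_lt x hKx).2).trans_le (hxb ▸ hb hxA)).false
  have hKy : K ≤ y := by
    by_contra! hyK
    exact (((lt_G_iff (hT hα').2).2 (hf.lt_map y ⟨hA₀ hyA, hyK⟩)).trans_le (hya ▸ ha hyA)).false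
  have hbK : b ≤ K := by
    rcases hxK.eq_or_lt with rfl | hxK
    · exact (hxb.symm.trans (hfix α)).le
    rcases hKy.eq_or_lt with rfl | hKy
    · exact absurd (hya ▸ ha hxA) (by rwa [hfix, not_le])
    have hxa := hf.lt_G_of_le_G hfm hf2m hβ₀ htwo (hT hα) (hT hα') ⟨hA₀ hxA, hxK⟩ hKy
      (hxb ▸ hb hyA)
    exact absurd (ha hxA) (hya ▸ hxa).not_ge
  have haK : a = K := by
    rw [← hya, hKy.antisymm' ((hb hyA).trans hbK), hfix]
  exact fun c hc ↦ le_antisymm ((hb hc).trans hbK) (haK ▸ ha hc)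

end Attractor

section StabilizingControl

lemma exists_forall_sub_le_mul (hf : IsPopulationMap f K) {c fm L : ℝ} (hc : c < K)
    (hfm : fm ∈ upperBounds (f '' Ioc 0 K)) (hL : ∀ x ∈ Ioo c K, f x - K ≤ L * (K - x)) :
    ∃ L', ∀ x ∈ Ioo 0 K, f x - K ≤ L' * (K - x) := by
  have hKc : 0 < K - c := sub_pos.2 hc
  have hKfm : K ≤ fm := by
    simpa only [hf.map_equilibrium] using hfm (mem_image_of_mem f ⟨hf.equilibrium_pos, le_rfl⟩)
  refine ⟨max L ((fm - K) / (K - c)), fun x hx ↦ ?_⟩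
  have hKx : 0 < K - x := sub_pos.2 hx.2
  rcases lt_or_ge c x with hcx | hxc
  · exact (hL x ⟨hcx, hx.2⟩).trans (by gcongr; exact le_max_left _ _)
  · calc
      f x - K ≤ fm - K := sub_le_sub_right (hfm (mem_image_of_mem f (Ioo_subset_Ioc_self hx))) K
      _ = (fm - K) / (K - c) * (K - c) := (div_mul_cancel₀ _ hKc.ne').symm
      _ ≤ (fm - K) / (K - c) * (K - x) := mul_le_mul_of_nonneg_left (sub_le_sub_left hxc K)
        (div_nonneg (sub_nonneg.2 hKfm) hKc.le)
      _ ≤ max L ((fm - K) / (K - c)) * (K - x) := by gcongr; exact le_max_right _ _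

lemma lt_G_G (hf : IsPopulationMap f K) {β x : ℝ} (hβ : β < 1) (hx : x ∈ Ioo 0 K)
    (hGx : G f β x ≤ K) : x < G f β (G f β x) := by
  have hxG : x < G f β x := (lt_G_iff hβ).2 (hf.lt_map x hx)
  exact hxG.trans_le ((le_G_iff hβ).2 (hf.le_map ⟨hx.1.trans hxG, hGx⟩))

lemma G_G_lt (hf : IsPopulationMap f K) {β x : ℝ} (hβ : β < 1) (hx : K < x)
    (hGx : K ≤ G f β x) : G f β (G f β x) < x :=
  ((G_le_iff hβ).2 (hf.map_le hGx)).trans_lt ((G_lt_iff hβ).2 (hf.map_pos_and_lt x hx).2)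

lemma exists_lt_G_G_and_G_G_lt (hf : IsPopulationMap f K) {a c fm L₁ L₂ : ℝ} (ha : 0 ≤ a)
    (hc : c < K) (hfm : fm ∈ upperBounds (f '' Ioc 0 K))
    (hL₁ : ∀ x ∈ Ioo c K, f x - K ≤ L₁ * (K - x))
    (hL₂ : ∀ x ∈ Ioo K fm, K - f x ≤ L₂ * (x - K)) :
    ∃ β ∈ Ioo (0 : ℝ) 1, (∀ x ∈ Ioo a K, x < G f β (G f β x)) ∧
      ∀ x ∈ Ioo K fm, G f β (G f β x) < x := by
  obtain ⟨L', hL'⟩ := hf.exists_forall_sub_le_mul hc hfm hL₁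
  obtain ⟨β, hβ, hleft, hright⟩ := exists_forall_G_le_and_le_G
    (fun x (hx : x ∈ Ioo 0 K) ↦ hx.2.le) (fun x (hx : x ∈ Ioo K fm) ↦ hx.1.le) hL' hL₂
  have hIoo : Ioo a K ⊆ Ioo 0 K := Ioo_subset_Ioo_left ha
  exact ⟨β, hβ, fun x hx ↦ hf.lt_G_G hβ.2 (hIoo hx) (hleft x (hIoo hx)),
    fun x hx ↦ hf.G_G_lt hβ.2 hx.1 (hright x hx)⟩

end StabilizingControl

end IsPopulationMap

theorem stmt10_general {f : ℝ → ℝ} {K fm f2m β₀ : ℝ} (hf : IsPopulationMap f K)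
    (hfm : fm ∈ upperBounds (f '' Ioc 0 K)) (hf2m : f2m ∈ lowerBounds (f '' Ioo K fm))
    (hβ₀ : 0 ≤ β₀) (htwo : ∀ x ∈ Ioo f2m K, x ≤ G f β₀ (G f β₀ x))
    {T : Set ℝ} (hTc : IsCompact T) (hT : T ⊆ Ioo β₀ 1)
    {C : Set ℝ} (hCc : IsCompact C) (hC : C ⊆ Ioi 0) {δ : ℝ} (hδ : 0 < δ) :
    ∃ S₁ : ℕ, ∀ α : ℕ → ℝ, (∀ n, α n ∈ T) → ∀ x : ℕ → ℝ, x 0 ∈ C →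
      (∀ n, x (n + 1) = G f (α n) (x n)) → ∀ n ≥ S₁, x n ∈ Ioo (K - δ) (K + δ) := by
  obtain ⟨m, M, hm, hCM, hmaps⟩ := hf.exists_mapsTo_Icc hfm hCc hC
  have hM : Icc m M ⊆ Ioi 0 := fun x hx ↦ hm.trans_le hx.1
  have hinv : image2 (G f) T (Icc m M) ⊆ Icc m M := image2_subset_iff.2 fun α hα x hx ↦
    G_mem_of_convex (convex_Icc m M) (hβ₀.trans (hT hα).1.le) (hT hα).2.le hx (hmaps hx)
  obtain ⟨N, hN⟩ := exists_forall_ge_orbit_mem (U := Ioo (K - δ) (K + δ)) hTc isCompact_Icc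
    (continuousOn_G (hf.continuousOn.mono hM) T) hinv fun A hA hAc hAG a ha ↦ by
      obtain rfl : a = K :=
        hf.subset_singleton_of_subset_image2_G hfm hf2m hβ₀ htwo hT hAc (hA.trans hM) hAG ha
      exact Ioo_mem_nhds (by linarith) (by linarith)
  exact ⟨N, fun α hα x hx₀ ↦ hN α hα x (hCM hx₀)⟩

/-- under variable control α_n ∈ [β_*, β^*] ⊂ (β̲_*, 1), the solution enters
the δ-neighbourhood of K in a finite number of steps S₁ depending only on x₀, β_*, β^*, δ,
and remains there. -/
theorem stmt10
    (f : ℝ → ℝ) (K : ℝ)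
    (hf_cont : ContinuousOn f (Set.Ici 0))
    (hf_nonneg : ∀ x, 0 ≤ x → 0 ≤ f x)
    (hf0 : f 0 = 0)
    (hK : 0 < K)
    (hbelow : ∀ x ∈ Set.Ioo 0 K, x < f x)
    (habove : ∀ x ∈ Set.Ioi K, 0 < f x ∧ f x < x)
    (fm f2m : ℝ)
    (hfm : IsGreatest (f '' Set.Icc 0 K) fm)
    (hfmK : K < fm)
    (hf2m : IsGLB (f '' Set.Ioo K fm) f2m)
    (xmax : ℝ) (hxmax_mem : xmax ∈ Set.Icc 0 K) (hxmax_val : f xmax = fm)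
    (hxmax_largest : ∀ y ∈ Set.Icc 0 K, f y = fm → y ≤ xmax)
    (Lm Lp : ℝ) (hLp : 1 < Lp) (hLmLp : Lp ≤ Lm)
    (hLipL : ∀ x ∈ Set.Ioo xmax K, f x - K ≤ Lm * (K - x))
    (hLipR : ∀ x ∈ Set.Ioo K fm, K - f x ≤ Lp * (x - K))
    (βunder : ℝ)
    (hβunder : βunder = sInf {β : ℝ | β ∈ Set.Ioo (0:ℝ) 1 ∧
          (∀ x ∈ Set.Ioo f2m K, x < G f β (G f β x)) ∧
          (∀ x ∈ Set.Ioo K fm, G f β (G f β x) < x)})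
    (βlo βhi : ℝ) (hβlo : βunder < βlo) (hβ : βlo < βhi) (hβhi : βhi < 1)
    (x₀ : ℝ) (hx₀ : 0 < x₀) (δ : ℝ) (hδ : 0 < δ) :
    ∃ S₁ : ℕ, ∀ α : ℕ → ℝ, (∀ n, α n ∈ Set.Icc βlo βhi) →
      ∀ x : ℕ → ℝ, x 0 = x₀ → (∀ n, x (n + 1) = G f (α n) (x n)) →
        ∀ n ≥ S₁, x n ∈ Set.Ioo (K - δ) (K + δ) := by
  have hf : IsPopulationMap f K := ⟨hf_cont.mono Ioi_subset_Ici_self, hK, hbelow, habove⟩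
  have hfm_ub : fm ∈ upperBounds (f '' Ioc 0 K) :=
    upperBounds_mono_set (image_mono Ioc_subset_Icc_self) hfm.2
  have hf2m_nonneg : 0 ≤ f2m := hf2m.2 (forall_mem_image.2 fun x hx ↦ (habove x hx.1).1.le)
  have hxmaxK : xmax < K := hxmax_mem.2.lt_of_ne fun h ↦
    hfmK.ne (by rw [← hxmax_val, h, hf.map_equilibrium])
  obtain ⟨β₀, ⟨hβ₀, htwo, -⟩, hβ₀lo⟩ := exists_lt_of_csInf_lt
    (hf.exists_lt_G_G_and_G_G_lt hf2m_nonneg hxmaxK hfm_ub hLipL hLipR) (hβunder ▸ hβlo)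
  exact stmt10_general hf hfm_ub hf2m.1 hβ₀.1.le (fun x hx ↦ (htwo x hx).le) isCompact_Icc
    (Icc_subset_Ioo hβ₀lo hβhi) isCompact_singleton (singleton_subset_iff.2 hx₀) hδ
end

section
/- Set β̲₀ := Ψ(L⁻, L⁺) = (L⁻L⁺−1)/((L⁻+1)(L⁺+1)). Then for every α ∈ (β̲₀, 1) and every x₀ > 0, the sequence defined by x_{n+1} = (1−α)f(x_n) + α x_n converges to K. -/
open Set Filter

/-- `Ψ(u,v) = (uv−1)/((u+1)(v+1))`. -/
noncomputable def Psi (u v : ℝ) : ℝ := (u * v - 1) / ((u + 1) * (v + 1))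

/-!
The one-sided slopes of `G f α` at `K` are bounded by `A = (1 - α) L⁻ - α` and `B = (1 - α) L⁺ - α`,
and `Ψ(L⁻, L⁺) < α` says exactly that `A * B < 1`. Hence a weight `c > 0` with `A < c` and
`c * B < 1` exists, and for it `max (c (K - y)) (y - K)`, the distance to `K` with its two sides
weighted differently, decreases strictly under `G f α` away from `K`. Every orbit is eventually
trapped in a compact interval `[m, M]` with `m > 0`, so LaSalle's principle gives convergence.
-/

open Function Topology

section Orbits

variable {X : Type*} [TopologicalSpace X]

theorem tendsto_of_strict_lyapunov {s : Set X} {g : X → X} {V : X → ℝ} {p : X} {x : ℕ → X}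
    (hs : IsCompact s) (hg : ContinuousOn g s) (hV : Continuous V) (hp : IsFixedPt g p)
    (hdecr : ∀ y ∈ s, y ≠ p → V (g y) < V y) (hxs : ∀ n, x n ∈ s)
    (hrec : ∀ n, x (n + 1) = g (x n)) : Tendsto x atTop (𝓝 p) := by
  have hanti : Antitone (V ∘ x) := antitone_nat_of_succ_le fun n ↦ by
    rw [comp_apply, comp_apply, hrec]
    rcases eq_or_ne (x n) p with h | h
    · rw [h, hp.eq]
    · exact (hdecr _ (hxs n) h).le
  have hbdd : BddBelow (range (V ∘ x)) :=
    (hs.bddBelow_image hV.continuousOn).mono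
      (range_subset_iff.2 fun n ↦ mem_image_of_mem V (hxs n))
  have hlim := tendsto_atTop_ciInf hanti hbdd
  refine hs.tendsto_nhds_of_unique_mapClusterPt (Eventually.of_forall hxs) fun y hy hcluster ↦ ?_
  obtain ⟨U, hU, hxy⟩ := mapClusterPt_iff_ultrafilter.1 hcluster
  have hxy_within : Tendsto x U (𝓝[s] y) :=
    tendsto_nhdsWithin_iff.2 ⟨hxy, Eventually.of_forall hxs⟩
  have hVy : V y = ⨅ n, (V ∘ x) n :=
    tendsto_nhds_unique ((hV.tendsto y).comp hxy) (hlim.mono_left hU)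
  have hVgy : V (g y) = ⨅ n, (V ∘ x) n := by
    refine tendsto_nhds_unique ((hV.tendsto (g y)).comp ((hg y hy).tendsto.comp hxy_within)) ?_
    refine ((hlim.comp (tendsto_add_atTop_nat 1)).mono_left hU).congr fun n ↦ ?_
    simp only [comp_apply, hrec]
  by_contra hne
  exact (hdecr y hy hne).ne (hVgy.trans hVy.symm)

theorem exists_orbit_le [ConditionallyCompleteLinearOrder X] [OrderTopology X] {g : X → X} {M : X}
    {x : ℕ → X} (hg : ContinuousOn g (Ici M)) (hlt : ∀ y ∈ Ici M, g y < y)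
    (hrec : ∀ n, x (n + 1) = g (x n)) : ∃ n, x n ≤ M := by
  by_contra! hM
  have hanti : Antitone x := antitone_nat_of_succ_le fun n ↦ by
    rw [hrec]
    exact (hlt _ (hM n).le).le
  have hlim := tendsto_atTop_ciInf hanti ⟨M, forall_mem_range.2 fun n ↦ (hM n).le⟩
  have hl : M ≤ ⨅ n, x n := le_ciInf fun n ↦ (hM n).le
  have hlim_within : Tendsto x atTop (𝓝[Ici M] ⨅ n, x n) :=
    tendsto_nhdsWithin_iff.2 ⟨hlim, Eventually.of_forall fun n ↦ (hM n).le⟩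
  have hfix : g (⨅ n, x n) = ⨅ n, x n := by
    refine tendsto_nhds_unique ((hg _ hl).tendsto.comp hlim_within) ?_
    refine (hlim.comp (tendsto_add_atTop_nat 1)).congr fun n ↦ ?_
    simp only [comp_apply, hrec]
  exact (hlt _ hl).ne hfix

theorem isFixedPt_of_le_left_of_le_right [LinearOrder X] [OrderClosedTopology X] {f : X → X} {K : X}
    [(𝓝[<] K).NeBot] [(𝓝[>] K).NeBot] (hf : ContinuousAt f K)
    (hleft : ∀ᶠ y in 𝓝[<] K, y ≤ f y) (hright : ∀ᶠ y in 𝓝[>] K, f y ≤ y) : IsFixedPt f K :=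
  le_antisymm
    (le_of_tendsto_of_tendsto (hf.mono_left nhdsWithin_le_nhds)
      (tendsto_id.mono_left nhdsWithin_le_nhds) hright)
    (le_of_tendsto_of_tendsto (tendsto_id.mono_left nhdsWithin_le_nhds)
      (hf.mono_left nhdsWithin_le_nhds) hleft)

theorem exists_pos_forall_le_orbit {g : ℝ → ℝ} {K M : ℝ} {x : ℕ → ℝ}
    (hg : ContinuousOn g (Icc K M)) (hpos : ∀ y ∈ Icc K M, 0 < g y)
    (hbelow : ∀ y ∈ Ioo 0 K, y ≤ g y) (hx0 : 0 < x 0) (hxM : ∀ n, x n ≤ M)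
    (hrec : ∀ n, x (n + 1) = g (x n)) : ∃ m, 0 < m ∧ ∀ n, m ≤ x n := by
  obtain ⟨δ, hδ, hδg⟩ := isCompact_Icc.exists_forall_le' hg hpos
  have hm : 0 < min (x 0) δ := lt_min hx0 hδ
  refine ⟨min (x 0) δ, hm, fun n ↦ ?_⟩
  induction n with
  | zero => exact min_le_left _ _
  | succ n ih =>
    rw [hrec]
    rcases lt_or_ge (x n) K with h | h
    · exact ih.trans (hbelow _ ⟨hm.trans_le ih, h⟩)
    · exact (min_le_right _ _).trans (hδg _ ⟨h, hxM n⟩)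

theorem exists_forall_orbit_add_mem_Icc {g : ℝ → ℝ} {K M : ℝ} {x : ℕ → ℝ} (hK : 0 < K)
    (hKM : K ≤ M) (hg : ContinuousOn g (Ioi 0)) (hpos : ∀ y ∈ Ioi 0, 0 < g y)
    (hbelow : ∀ y ∈ Ioo 0 K, y ≤ g y) (habove : ∀ y ∈ Ici M, g y < y)
    (hM : ∀ y ∈ Ioc 0 M, g y ≤ M) (hx0 : 0 < x 0) (hrec : ∀ n, x (n + 1) = g (x n)) :
    ∃ N m, 0 < m ∧ ∀ n, x (n + N) ∈ Icc m M := by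
  have hxpos : ∀ n, 0 < x n := fun n ↦ by
    induction n with
    | zero => exact hx0
    | succ n ih => exact hrec n ▸ hpos _ ih
  obtain ⟨N, hN⟩ : ∃ N, x N ≤ M :=
    exists_orbit_le (hg.mono (Ici_subset_Ioi.2 (hK.trans_le hKM))) habove hrec
  have hrecN : ∀ n, x (n + 1 + N) = g (x (n + N)) := fun n ↦ by rw [add_right_comm, hrec]
  have hxM : ∀ n, x (n + N) ≤ M := fun n ↦ by
    induction n with
    | zero => rwa [zero_add]
    | succ n ih => exact hrecN n ▸ hM _ ⟨hxpos _, ih⟩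
  have hKpos : Icc K M ⊆ Ioi 0 := fun y hy ↦ hK.trans_le hy.1
  obtain ⟨m, hm, hmx⟩ := exists_pos_forall_le_orbit (x := fun n ↦ x (n + N)) (hg.mono hKpos)
    (fun y hy ↦ hpos y (hKpos hy)) hbelow (hxpos _) hxM hrecN
  exact ⟨N, m, hm, fun n ↦ ⟨hmx n, hxM n⟩⟩

end Orbits

section OneSidedLipschitz

variable {f : ℝ → ℝ} {a b m y K L : ℝ}

theorem sub_le_mul_of_isMaxOn (hf : ContinuousOn f (Icc m K)) (hmK : m < K)
    (hmax : IsMaxOn f (Icc a K) m) (hKm : K ≤ f m)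
    (hL : ∀ y ∈ Ioo m K, f y - K ≤ L * (K - y)) : ∀ y ∈ Icc a K, f y - K ≤ L * (K - y) := by
  have hcl : closure (Ioo m K) = Icc m K := closure_Ioo hmK.ne
  have hL_closed : ∀ y ∈ Icc m K, f y - K ≤ L * (K - y) := fun y hy ↦
    le_on_closure (f := fun y ↦ f y - K) (g := fun y ↦ L * (K - y)) hL
      (by rw [hcl]; fun_prop) (by fun_prop) (hcl ▸ hy)
  have hLm : f m - K ≤ L * (K - m) := hL_closed m (left_mem_Icc.2 hmK.le)
  have hL_nonneg : 0 ≤ L :=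
    nonneg_of_mul_nonneg_left ((sub_nonneg.2 hKm).trans hLm) (sub_pos.2 hmK)
  intro y hy
  rcases le_total m y with hmy | hym
  · exact hL_closed y ⟨hmy, hy.2⟩
  · calc f y - K ≤ f m - K := sub_le_sub_right (hmax hy) K
      _ ≤ L * (K - m) := hLm
      _ ≤ L * (K - y) := by gcongr

theorem sub_le_mul_of_continuousOn_Icc (hf : ContinuousOn f (Icc K b)) (hKb : K < b)
    (hL : ∀ y ∈ Ioo K b, K - f y ≤ L * (y - K)) : ∀ y ∈ Icc K b, K - f y ≤ L * (y - K) := by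
  have hcl : closure (Ioo K b) = Icc K b := closure_Ioo hKb.ne
  exact fun y hy ↦ le_on_closure (f := fun y ↦ K - f y) (g := fun y ↦ L * (y - K)) hL
    (by rw [hcl]; fun_prop) (by fun_prop) (hcl ▸ hy)

theorem neg_one_lt_of_sub_le_mul (hyK : y < K) (hy : y < f y) (hL : f y - K ≤ L * (K - y)) :
    -1 < L :=
  lt_of_mul_lt_mul_right (by linarith : -1 * (K - y) < L * (K - y)) (sub_nonneg.2 hyK.le)

theorem neg_one_lt_of_sub_le_mul' (hKy : K < y) (hy : f y < y) (hL : K - f y ≤ L * (y - K)) :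
    -1 < L :=
  lt_of_mul_lt_mul_right (by linarith : -1 * (y - K) < L * (y - K)) (sub_nonneg.2 hKy.le)

end OneSidedLipschitz

section ControlMap

variable {f : ℝ → ℝ} {α y M K L : ℝ} {s : Set ℝ}

theorem continuousOn_G_s17 (hf : ContinuousOn f s) : ContinuousOn (G f α) s := by
  unfold G
  fun_prop

theorem isFixedPt_G (hK : IsFixedPt f K) : IsFixedPt (G f α) K := by
  rw [IsFixedPt, G, hK.eq]
  ring

theorem lt_G (hα : α < 1) (hy : y < f y) : y < G f α y := by
  have := mul_pos (sub_pos.2 hα) (sub_pos.2 hy)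
  unfold G
  linarith

theorem G_lt (hα : α < 1) (hy : f y < y) : G f α y < y := by
  have := mul_pos (sub_pos.2 hα) (sub_pos.2 hy)
  unfold G
  linarith

theorem G_pos (hα : α ∈ Ico 0 1) (hy : 0 ≤ y) (hfy : 0 < f y) : 0 < G f α y :=
  add_pos_of_pos_of_nonneg (mul_pos (sub_pos.2 hα.2) hfy) (mul_nonneg hα.1 hy)

theorem G_le (hα : α ∈ Icc 0 1) (hy : y ≤ M) (hfy : f y ≤ M) : G f α y ≤ M :=
  convex_Iic M hfy hy (sub_nonneg.2 hα.2) hα.1 (sub_add_cancel 1 α)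

theorem G_sub_le_mul (hα : α ≤ 1) (hL : f y - K ≤ L * (K - y)) :
    G f α y - K ≤ ((1 - α) * L - α) * (K - y) :=
  calc G f α y - K = (1 - α) * (f y - K) - α * (K - y) := by unfold G; ring
    _ ≤ (1 - α) * (L * (K - y)) - α * (K - y) := by have := sub_nonneg.2 hα; gcongr
    _ = ((1 - α) * L - α) * (K - y) := by ring

theorem sub_G_le_mul (hα : α ≤ 1) (hL : K - f y ≤ L * (y - K)) :
    K - G f α y ≤ ((1 - α) * L - α) * (y - K) :=
  calc K - G f α y = (1 - α) * (K - f y) - α * (y - K) := by unfold G; ring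
    _ ≤ (1 - α) * (L * (y - K)) - α * (y - K) := by have := sub_nonneg.2 hα; gcongr
    _ = ((1 - α) * L - α) * (y - K) := by ring

end ControlMap

theorem Psi_pos {u v : ℝ} (hu : 1 < u) (hv : 1 < v) : 0 < Psi u v :=
  div_pos (sub_pos.2 (one_lt_mul_of_lt_of_le hu hv.le)) (by positivity)

theorem Psi_lt_iff {u v α : ℝ} (hu : -1 < u) (hv : -1 < v) (hα : α < 1) :
    Psi u v < α ↔ ((1 - α) * u - α) * ((1 - α) * v - α) < 1 := by
  have hden : 0 < (u + 1) * (v + 1) := mul_pos (by linarith) (by linarith)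
  have hid : 1 - ((1 - α) * u - α) * ((1 - α) * v - α) =
      (1 - α) * (α * ((u + 1) * (v + 1)) - (u * v - 1)) := by ring
  rw [Psi, div_lt_iff₀ hden, ← sub_pos, ← sub_pos (a := (1 : ℝ)), hid,
    mul_pos_iff_of_pos_left (sub_pos.2 hα)]

theorem exists_pos_lt_and_mul_lt_one {A B : ℝ} (hAB : A * B < 1) :
    ∃ c, 0 < c ∧ A < c ∧ c * B < 1 := by
  rcases le_or_gt B 0 with hB | hB
  · obtain ⟨c, hc⟩ := exists_gt (max 0 A)
    obtain ⟨hc0, hcA⟩ := max_lt_iff.1 hc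
    exact ⟨c, hc0, hcA, (mul_nonpos_of_nonneg_of_nonpos hc0.le hB).trans_lt one_pos⟩
  · obtain ⟨c, hc, hcB⟩ := exists_between (max_lt (one_div_pos.2 hB) ((lt_div_iff₀ hB).2 hAB))
    obtain ⟨hc0, hcA⟩ := max_lt_iff.1 hc
    exact ⟨c, hc0, hcA, (lt_div_iff₀ hB).1 hcB⟩

/-- The asymmetric distance from `y` to `K`, in which the side below `K` has weight `c`. It is the
Lyapunov function of the controlled equation for a suitable `c > 0`. -/
noncomputable def weightedDist (K c y : ℝ) : ℝ := max (c * (K - y)) (y - K)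

section Convergence

variable {f : ℝ → ℝ} {K Lm Lp α c y z : ℝ}

theorem continuous_weightedDist : Continuous (weightedDist K c) := by
  unfold weightedDist
  fun_prop

theorem weightedDist_lt_of_lt (hc : 0 < c) (hyz : y < z) (hz : z - K < c * (K - y)) :
    weightedDist K c z < weightedDist K c y :=
  lt_max_of_lt_left (max_lt (by gcongr) hz)

theorem weightedDist_lt_of_gt (hzy : z < y) (hz : c * (K - z) < y - K) :
    weightedDist K c z < weightedDist K c y :=
  lt_max_of_lt_right (max_lt hz (by gcongr))

theorem weightedDist_G_lt (hα : α < 1) (hc : 0 < c) (hcm : (1 - α) * Lm - α < c)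
    (hcp : c * ((1 - α) * Lp - α) < 1) (hbelow : y < K → y < f y ∧ f y - K ≤ Lm * (K - y))
    (habove : K < y → f y < y ∧ K - f y ≤ Lp * (y - K)) (hy : y ≠ K) :
    weightedDist K c (G f α y) < weightedDist K c y := by
  rcases hy.lt_or_gt with hyK | hKy
  · obtain ⟨hlt, hLm⟩ := hbelow hyK
    refine weightedDist_lt_of_lt hc (lt_G hα hlt) ?_
    calc G f α y - K ≤ ((1 - α) * Lm - α) * (K - y) := G_sub_le_mul hα.le hLm
      _ < c * (K - y) := mul_lt_mul_of_pos_right hcm (sub_pos.2 hyK)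
  · obtain ⟨hlt, hLp⟩ := habove hKy
    refine weightedDist_lt_of_gt (G_lt hα hlt) ?_
    calc c * (K - G f α y) ≤ c * (((1 - α) * Lp - α) * (y - K)) := by
          gcongr; exact sub_G_le_mul hα.le hLp
      _ = c * ((1 - α) * Lp - α) * (y - K) := (mul_assoc _ _ _).symm
      _ < y - K := mul_lt_of_lt_one_left (sub_pos.2 hKy) hcp

theorem tendsto_of_forall_mem_isCompact {s : Set ℝ} {x : ℕ → ℝ} (hs : IsCompact s)
    (hf : ContinuousOn f s) (hK : IsFixedPt f K)
    (hbelow : ∀ y ∈ s, y < K → y < f y ∧ f y - K ≤ Lm * (K - y))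
    (habove : ∀ y ∈ s, K < y → f y < y ∧ K - f y ≤ Lp * (y - K))
    (hLm : -1 < Lm) (hLp : -1 < Lp) (hα : α ∈ Ioo (Psi Lm Lp) 1) (hxs : ∀ n, x n ∈ s)
    (hrec : ∀ n, x (n + 1) = G f α (x n)) : Tendsto x atTop (𝓝 K) := by
  obtain ⟨c, hc, hcm, hcp⟩ := exists_pos_lt_and_mul_lt_one ((Psi_lt_iff hLm hLp hα.2).1 hα.1)
  exact tendsto_of_strict_lyapunov hs (continuousOn_G_s17 hf) continuous_weightedDist
    (isFixedPt_G hK)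
    (fun y hy ↦ weightedDist_G_lt hα.2 hc hcm hcp (hbelow y hy) (habove y hy)) hxs hrec

theorem exists_forall_orbit_G_add_mem_Icc {M : ℝ} {x : ℕ → ℝ} (hf : ContinuousOn f (Ioi 0))
    (hK : 0 < K) (hfix : IsFixedPt f K) (hbelow : ∀ y ∈ Ioo 0 K, y < f y)
    (habove : ∀ y ∈ Ioi K, 0 < f y ∧ f y < y) (hKM : K < M) (hM : ∀ y ∈ Ioc 0 K, f y ≤ M)
    (hα : α ∈ Ico 0 1) (hx0 : 0 < x 0) (hrec : ∀ n, x (n + 1) = G f α (x n)) :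
    ∃ N m, 0 < m ∧ ∀ n, x (n + N) ∈ Icc m M := by
  have hf_pos : ∀ y ∈ Ioi 0, 0 < f y := fun y hy ↦ by
    rcases lt_trichotomy y K with h | rfl | h
    · exact lt_trans hy (hbelow y ⟨hy, h⟩)
    · exact hfix.symm ▸ hK
    · exact (habove y h).1
  have hf_le : ∀ y ∈ Ioc 0 M, f y ≤ M := fun y hy ↦ by
    rcases le_or_gt y K with h | h
    · exact hM y ⟨hy.1, h⟩
    · exact (habove y h).2.le.trans hy.2
  exact exists_forall_orbit_add_mem_Icc hK hKM.le (continuousOn_G_s17 hf)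
    (fun y hy ↦ G_pos hα (le_of_lt hy) (hf_pos y hy)) (fun y hy ↦ (lt_G hα.2 (hbelow y hy)).le)
    (fun y hy ↦ G_lt hα.2 (habove y (hKM.trans_le hy)).2)
    (fun y hy ↦ G_le (Ico_subset_Icc_self hα) hy.2 (hf_le y hy)) hx0 hrec

theorem stmt17_general {xmax : ℝ} {x : ℕ → ℝ} (hf : ContinuousOn f (Ici 0)) (hK : 0 < K)
    (hbelow : ∀ y ∈ Ioo 0 K, y < f y) (habove : ∀ y ∈ Ioi K, 0 < f y ∧ f y < y)
    (hxmax_mem : xmax ∈ Icc 0 K) (hxmax : IsMaxOn f (Icc 0 K) xmax) (hKmax : K < f xmax)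
    (hLipL : ∀ y ∈ Ioo xmax K, f y - K ≤ Lm * (K - y))
    (hLipR : ∀ y ∈ Ioo K (f xmax), K - f y ≤ Lp * (y - K))
    (hα : α ∈ Ioo (Psi Lm Lp) 1) (hα0 : 0 ≤ α) (hx0 : 0 < x 0)
    (hrec : ∀ n, x (n + 1) = G f α (x n)) : Tendsto x atTop (𝓝 K) := by
  have hfix : IsFixedPt f K := isFixedPt_of_le_left_of_le_right (hf.continuousAt (Ici_mem_nhds hK))
    (eventually_of_mem (Ioo_mem_nhdsLT hK) fun y hy ↦ (hbelow y hy).le)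
    (eventually_of_mem self_mem_nhdsWithin fun y hy ↦ (habove y hy).2.le)
  have hxmaxK : xmax < K := hxmax_mem.2.lt_of_ne fun h ↦ by
    rw [h, hfix.eq] at hKmax
    exact hKmax.false
  have hL := sub_le_mul_of_isMaxOn (hf.mono fun y hy ↦ hxmax_mem.1.trans hy.1) hxmaxK hxmax
    hKmax.le hLipL
  have hR := sub_le_mul_of_continuousOn_Icc (hf.mono fun y hy ↦ hK.le.trans hy.1) hKmax hLipR
  have hLm : -1 < Lm :=
    neg_one_lt_of_sub_le_mul hxmaxK (hxmaxK.trans hKmax) (hL _ hxmax_mem)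
  have hLp : -1 < Lp :=
    neg_one_lt_of_sub_le_mul' hKmax (habove _ hKmax).2 (hR _ (right_mem_Icc.2 hKmax.le))
  obtain ⟨N, m, hm, hxN⟩ := exists_forall_orbit_G_add_mem_Icc (hf.mono Ioi_subset_Ici_self) hK hfix
    hbelow habove hKmax (fun y hy ↦ hxmax (Ioc_subset_Icc_self hy)) ⟨hα0, hα.2⟩ hx0 hrec
  refine (tendsto_add_atTop_iff_nat N).1 <| tendsto_of_forall_mem_isCompact isCompact_Icc
    (hf.mono fun y hy ↦ hm.le.trans hy.1) hfix (fun y hy hyK ↦ ?_) (fun y hy hKy ↦ ?_)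
    hLm hLp hα hxN fun n ↦ by rw [add_right_comm, hrec]
  · have hy0 : 0 < y := hm.trans_le hy.1
    exact ⟨hbelow y ⟨hy0, hyK⟩, hL y ⟨hy0.le, hyK.le⟩⟩
  · exact ⟨(habove y hKy).2, hR y ⟨hKy.le, hy.2⟩⟩

end Convergence

/-- any constant control α ∈ (β̲₀, 1) with β̲₀ = Ψ(L⁻,L⁺) globally
stabilizes K for the deterministic PBC equation. -/
theorem stmt17
    (f : ℝ → ℝ) (K : ℝ)
    (hf_cont : ContinuousOn f (Set.Ici 0))
    (hf_nonneg : ∀ x, 0 ≤ x → 0 ≤ f x)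
    (hf0 : f 0 = 0)
    (hK : 0 < K)
    (hbelow : ∀ x ∈ Set.Ioo 0 K, x < f x)
    (habove : ∀ x ∈ Set.Ioi K, 0 < f x ∧ f x < x)
    (fm f2m : ℝ)
    (hfm : IsGreatest (f '' Set.Icc 0 K) fm)
    (hfmK : K < fm)
    (hf2m : IsGLB (f '' Set.Ioo K fm) f2m)
    (xmax : ℝ) (hxmax_mem : xmax ∈ Set.Icc 0 K) (hxmax_val : f xmax = fm)
    (hxmax_largest : ∀ y ∈ Set.Icc 0 K, f y = fm → y ≤ xmax)
    (Lm Lp : ℝ) (hLp : 1 < Lp) (hLmLp : Lp ≤ Lm)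
    (hLipL : ∀ x ∈ Set.Ioo xmax K, f x - K ≤ Lm * (K - x))
    (hLipR : ∀ x ∈ Set.Ioo K fm, K - f x ≤ Lp * (x - K))
    (α : ℝ) (hα : α ∈ Set.Ioo (Psi Lm Lp) 1)
    (x : ℕ → ℝ) (hx0 : 0 < x 0)
    (hrec : ∀ n, x (n + 1) = (1 - α) * f (x n) + α * x n) :
    Tendsto x atTop (nhds K) := by
  subst hxmax_val
  exact stmt17_general hf_cont hK hbelow habove hxmax_mem (fun y hy ↦ hfm.2 ⟨y, hy, rfl⟩) hfmK
    hLipL hLipR hα ((Psi_pos (hLp.trans_le hLmLp) hLp).trans hα.1).le hx0 hrec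
end
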